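/- arXiv:2001.04071 — 5 statements merged into one kernel-verified Lean document; each statement's English description precedes it below -/
import Mathlib

section
/- For every ξ' ∈ ℝ^{n−1} with ξ' ≠ 0, one has A(ξ') ≥ √(λ̃₁|ξ'|² + F(ξ')²) > |F(ξ')|, where λ̃₁ = λ₀²/Λ₀². -/
/-- The natural embedding of the first `n-1` indices into `Fin n`. -/
def emb (n : ℕ) : Fin (n - 1) → Fin n := Fin.castLE (Nat.sub_le n 1)

open Finset in
theorem core_aux (m : ℕ) (M N : Fin (m+1) → Fin (m+1) → ℝ) (γ lam Lam : ℝ)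
    (hlam : 0 < lam) (hlL : lam ≤ Lam)
    (hMsym : ∀ l j, M l j = M j l) (hNsym : ∀ l j, N l j = N j l)
    (hM : ∀ ξ : Fin (m+1) → ℝ,
      lam * ∑ i, ξ i ^ 2 ≤ ∑ l, ∑ j, M l j * ξ l * ξ j ∧
      ∑ l, ∑ j, M l j * ξ l * ξ j ≤ Lam * ∑ i, ξ i ^ 2)
    (hN : ∀ ξ : Fin (m+1) → ℝ,
      lam * ∑ i, ξ i ^ 2 ≤ ∑ l, ∑ j, N l j * ξ l * ξ j ∧
      ∑ l, ∑ j, N l j * ξ l * ξ j ≤ Lam * ∑ i, ξ i ^ 2)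
    (a : Fin (m+1) → Fin (m+1) → ℂ)
    (ha : ∀ l j, a l j = (M l j : ℂ) + (γ : ℂ) * (N l j : ℂ) * Complex.I)
    (ξ' : Fin m → ℝ) (E F A B : ℝ)
    (hEF : ∑ j : Fin m, a (Fin.last m) j.castSucc / a (Fin.last m) (Fin.last m) * (ξ' j : ℂ)
      = (E : ℂ) + (F : ℂ) * Complex.I)
    (hb : ((a (Fin.last m) (Fin.last m)) ^ 2)⁻¹ * ∑ l : Fin m, ∑ j : Fin m,
      (a l.castSucc j.castSucc * a (Fin.last m) (Fin.last m)
        - a (Fin.last m) l.castSucc * a (Fin.last m) j.castSucc) * (ξ' l : ℂ) * (ξ' j : ℂ)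
      = ((A : ℂ) - (B : ℂ) * Complex.I) ^ 2) :
    lam / Lam * ∑ i, ξ' i ^ 2 + F ^ 2 ≤ A ^ 2 := by
  have hL : 0 < Lam := lt_of_lt_of_le hlam hlL
  -- the bounds on the corner entries
  have hMe := hM (Pi.single (Fin.last m) 1)
  have hNe := hN (Pi.single (Fin.last m) 1)
  simp [Pi.single_apply, ite_pow] at hMe hNe
  set p := M (Fin.last m) (Fin.last m) with hp
  set q := N (Fin.last m) (Fin.last m) with hq
  set c := a (Fin.last m) (Fin.last m) with hc
  have hcv : c = (p : ℂ) + (γ : ℂ) * (q : ℂ) * Complex.I := ha _ _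
  have hc0 : c ≠ 0 := by
    intro h
    have := congrArg Complex.re (hcv.symm.trans h)
    simp at this
    linarith [hMe.1]
  -- the linear sum
  set T : ℂ := ∑ j : Fin m, a (Fin.last m) j.castSucc * (ξ' j : ℂ) with hT
  have hTv : T = c * ((E : ℂ) + (F : ℂ) * Complex.I) := by
    rw [← hEF, mul_sum, hT]
    refine sum_congr rfl fun j _ => ?_
    field_simp
  set S : ℂ := ∑ l : Fin m, ∑ j : Fin m, a l.castSucc j.castSucc * (ξ' l : ℂ) * (ξ' j : ℂ) with hS
  have hSv : S * c - T * T = c ^ 2 * ((A : ℂ) - (B : ℂ) * Complex.I) ^ 2 := by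
    rw [← hb, ← mul_assoc, mul_inv_cancel₀ (pow_ne_zero 2 hc0), one_mul, hS, hT, sum_mul_sum,
      sum_mul, ← sum_sub_distrib]
    refine sum_congr rfl fun l _ => ?_
    rw [sum_mul, ← sum_sub_distrib]
    refine sum_congr rfl fun j _ => ?_
    ring
  set x : ℝ := B - E with hx
  let ξ : Fin (m+1) → ℝ := Fin.snoc ξ' x
  have hM1 := (hM ξ).1
  have hN1 := (hN ξ).1
  have hsq : ∑ i, ξ i ^ 2 = ∑ i, ξ' i ^ 2 + x ^ 2 := by
    simp [ξ, Fin.sum_univ_castSucc]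
  have hasym : ∀ l j, a l j = a j l := fun l j => by rw [ha, ha, hMsym, hNsym]
  set k1 := ∑ l, ∑ j, M l j * ξ l * ξ j with hk1
  set k2 := ∑ l, ∑ j, N l j * ξ l * ξ j with hk2
  have hQ1 : ∑ l, ∑ j, a l j * (ξ l : ℂ) * (ξ j : ℂ) = (k1 : ℂ) + γ * (k2 : ℂ) * Complex.I := by
    rw [hk1, hk2]
    push_cast
    simp only [mul_sum, sum_mul, ← sum_add_distrib]
    refine sum_congr rfl fun l _ => sum_congr rfl fun j _ => ?_
    rw [ha]; ring
  have hQ2 : ∑ l, ∑ j, a l j * (ξ l : ℂ) * (ξ j : ℂ) = S + 2 * x * T + c * x ^ 2 := by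
    have e1 : ∑ l : Fin m, a l.castSucc (Fin.last m) * (ξ' l : ℂ) * (x : ℂ) = x * T := by
      rw [hT, mul_sum]
      refine sum_congr rfl fun l _ => ?_
      rw [hasym]; ring
    have e2 : ∑ l : Fin m, a (Fin.last m) l.castSucc * (x : ℂ) * (ξ' l : ℂ) = x * T := by
      rw [hT, mul_sum]
      refine sum_congr rfl fun l _ => ?_
      ring
    simp only [ξ, Fin.sum_univ_castSucc, Fin.snoc_castSucc, Fin.snoc_last, sum_add_distrib, e1, e2]
    rw [← hS, ← hc]; ring
  have hSc : S = c * (((E : ℂ) + F * Complex.I) ^ 2 + ((A : ℂ) - B * Complex.I) ^ 2) := by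
    apply mul_right_cancel₀ hc0
    rw [hTv] at hSv
    linear_combination hSv
  have hkey : (k1 : ℂ) + γ * (k2 : ℂ) * Complex.I
      = ((p : ℂ) + γ * q * Complex.I) * ((A ^ 2 - F ^ 2 : ℝ) + (2 * B * (F - A) : ℝ) * Complex.I) := by
    rw [← hQ1, hQ2, hSc, hTv, ← hcv, hx]
    push_cast
    linear_combination c * ((F : ℂ) ^ 2 + B ^ 2) * Complex.I_sq
  have hre := congrArg Complex.re hkey
  have him := congrArg Complex.im hkey
  simp only [Complex.add_re, Complex.add_im, Complex.mul_re, Complex.mul_im, Complex.ofReal_re,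
    Complex.ofReal_im, Complex.I_re, Complex.I_im] at hre him
  ring_nf at hre him
  have hcomb : p * k1 + γ ^ 2 * q * k2 = (p ^ 2 + γ ^ 2 * q ^ 2) * (A ^ 2 - F ^ 2) := by
    linear_combination p * hre + γ * q * him
  rw [hsq] at hM1 hN1
  set R := ∑ i, ξ' i ^ 2 with hR
  have hR0 : 0 ≤ R := sum_nonneg fun i _ => sq_nonneg _
  have hk1' : lam * R ≤ k1 := by nlinarith [sq_nonneg x]
  have hk2' : lam * R ≤ k2 := by nlinarith [sq_nonneg x]
  have hp0 : 0 < p := by linarith [hMe.1]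
  have hq0 : 0 < q := by linarith [hNe.1]
  have hlR : 0 ≤ lam * R := by positivity
  have h1 : p ^ 2 * (lam * R) ≤ Lam * (p * k1) := by
    have : p * (lam * R) ≤ Lam * k1 := mul_le_mul hMe.2 hk1' hlR hL.le
    nlinarith
  have h2 : (γ ^ 2 * q ^ 2) * (lam * R) ≤ Lam * (γ ^ 2 * q * k2) := by
    have : q * (lam * R) ≤ Lam * k2 := mul_le_mul hNe.2 hk2' hlR hL.le
    have := mul_le_mul_of_nonneg_left this (by positivity : 0 ≤ γ ^ 2 * q)
    linarith
  have hD : 0 < p ^ 2 + γ ^ 2 * q ^ 2 := by positivity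
  have h3 : lam * R ≤ Lam * (A ^ 2 - F ^ 2) := by
    refine le_of_mul_le_mul_left ?_ hD
    have : (p ^ 2 + γ ^ 2 * q ^ 2) * (Lam * (A ^ 2 - F ^ 2)) = Lam * (p * k1 + γ ^ 2 * q * k2) := by
      rw [hcomb]; ring
    rw [this]; linarith
  have h4 : lam / Lam * R ≤ A ^ 2 - F ^ 2 := by
    rw [div_mul_eq_mul_div, div_le_iff₀ hL]; linarith
  linarith

/-- for `ξ' ≠ 0`, `A(ξ') ≥ √(λ̃₁|ξ'|² + F(ξ')²) > |F(ξ')|`, `λ̃₁ = λ₀²/Λ₀²`. -/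
theorem stmt_5
    (n : ℕ) (hn : 2 ≤ n)
    (M N : Fin n → Fin n → ℝ) (γ lam₀ Λ₀ : ℝ)
    (hγ : 0 < γ) (hlam₀ : 0 < lam₀) (hlamΛ : lam₀ ≤ Λ₀)
    (hMsym : ∀ l j, M l j = M j l) (hNsym : ∀ l j, N l j = N j l)
    (hM : ∀ ξ : Fin n → ℝ,
      lam₀ * ∑ i, ξ i ^ 2 ≤ ∑ l, ∑ j, M l j * ξ l * ξ j ∧
      ∑ l, ∑ j, M l j * ξ l * ξ j ≤ Λ₀ * ∑ i, ξ i ^ 2)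
    (hN : ∀ ξ : Fin n → ℝ,
      lam₀ * ∑ i, ξ i ^ 2 ≤ ∑ l, ∑ j, N l j * ξ l * ξ j ∧
      ∑ l, ∑ j, N l j * ξ l * ξ j ≤ Λ₀ * ∑ i, ξ i ^ 2)
    (a : Fin n → Fin n → ℂ)
    (ha : ∀ l j, a l j = (M l j : ℂ) + (γ : ℂ) * (N l j : ℂ) * Complex.I)
    (en : Fin n) (hen : (en : ℕ) = n - 1)
    (E F : (Fin (n - 1) → ℝ) → ℝ)
    (hEF : ∀ ξ' : Fin (n - 1) → ℝ,
      ∑ j, a en (emb n j) / a en en * (ξ' j : ℂ) = (E ξ' : ℂ) + (F ξ' : ℂ) * Complex.I)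
    (A B : (Fin (n - 1) → ℝ) → ℝ) (hA0 : ∀ ξ' : Fin (n - 1) → ℝ, 0 ≤ A ξ')
    (hb : ∀ ξ' : Fin (n - 1) → ℝ,
      ((a en en) ^ 2)⁻¹ * ∑ l, ∑ j, (a (emb n l) (emb n j) * a en en - a en (emb n l) * a en (emb n j)) * (ξ' l : ℂ) * (ξ' j : ℂ) = ((A ξ' : ℂ) - (B ξ' : ℂ) * Complex.I) ^ 2) :
    ∀ ξ' : Fin (n - 1) → ℝ, ξ' ≠ 0 →
      Real.sqrt (lam₀ ^ 2 / Λ₀ ^ 2 * (∑ i, ξ' i ^ 2) + F ξ' ^ 2) ≤ A ξ' ∧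
      |F ξ'| < Real.sqrt (lam₀ ^ 2 / Λ₀ ^ 2 * (∑ i, ξ' i ^ 2) + F ξ' ^ 2) := by
  intro ξ' hξ
  have hL : 0 < Λ₀ := lt_of_lt_of_le hlam₀ hlamΛ
  have hR : 0 < ∑ i, ξ' i ^ 2 := by
    obtain ⟨i, hi⟩ := Function.ne_iff.mp hξ
    exact Finset.sum_pos' (fun i _ => sq_nonneg _) ⟨i, Finset.mem_univ _, by
      have : ξ' i ≠ 0 := hi
      positivity⟩
  have hcore : lam₀ / Λ₀ * ∑ i, ξ' i ^ 2 + F ξ' ^ 2 ≤ A ξ' ^ 2 := by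
    have h1 := hEF ξ'
    have h2 := hb ξ'
    generalize E ξ' = E0 at *
    generalize F ξ' = F0 at *
    generalize A ξ' = A0 at *
    generalize B ξ' = B0 at *
    clear hEF hb hA0
    obtain ⟨m, rfl⟩ : ∃ m, n = m + 1 := ⟨n - 1, by omega⟩
    obtain rfl : en = Fin.last m := Fin.ext (by simpa using hen)
    exact core_aux m M N γ lam₀ Λ₀ hlam₀ hlamΛ hMsym hNsym hM hN a ha ξ' E0 F0 A0 B0 h1 h2
  have hr : lam₀ / Λ₀ ≤ 1 := (div_le_one hL).2 hlamΛ
  have hr0 : 0 < lam₀ / Λ₀ := by positivity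
  constructor
  · rw [← div_pow]
    apply Real.sqrt_le_iff.2 ⟨hA0 ξ', ?_⟩
    have : (lam₀ / Λ₀) ^ 2 * ∑ i, ξ' i ^ 2 ≤ lam₀ / Λ₀ * ∑ i, ξ' i ^ 2 :=
      mul_le_mul_of_nonneg_right (by nlinarith) hR.le
    linarith
  · apply Real.lt_sqrt_of_sq_lt
    rw [sq_abs]
    have : 0 < lam₀ ^ 2 / Λ₀ ^ 2 * ∑ i, ξ' i ^ 2 := by positivity
    linarith
end

section
/- For every ξ ∈ ℝⁿ, Re(a_{nn}^{−1}·𝒜ξ·ξ) ≥ (λ₀²/Λ₀²)|ξ|², where 𝒜ξ·ξ = Σ_{ℓ,j=1}^n a_{ℓj}ξ_ℓξ_j. -/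
/-- `Re(a_nn⁻¹ · 𝒜ξ·ξ) ≥ (lam₀²/Λ₀²)|ξ|²` for every `ξ ∈ ℝⁿ`,
where `𝒜 = M + iγN` is a complex symmetric matrix whose real and imaginary
parts satisfy two-sided ellipticity bounds `lam₀|ξ|² ≤ Mξ·ξ, Nξ·ξ ≤ Λ₀|ξ|²`. -/
theorem stmt_6 (n : ℕ) (hn : 2 ≤ n)
    (M N : Fin n → Fin n → ℝ) (γ lam₀ Λ₀ : ℝ)
    (hγ : 0 < γ) (hlam₀ : 0 < lam₀) (hlamΛ : lam₀ ≤ Λ₀)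
    (hMsym : ∀ l j, M l j = M j l) (hNsym : ∀ l j, N l j = N j l)
    (hM : ∀ ξ : Fin n → ℝ,
      lam₀ * ∑ i, ξ i ^ 2 ≤ ∑ l, ∑ j, M l j * ξ l * ξ j ∧
      ∑ l, ∑ j, M l j * ξ l * ξ j ≤ Λ₀ * ∑ i, ξ i ^ 2)
    (hN : ∀ ξ : Fin n → ℝ,
      lam₀ * ∑ i, ξ i ^ 2 ≤ ∑ l, ∑ j, N l j * ξ l * ξ j ∧
      ∑ l, ∑ j, N l j * ξ l * ξ j ≤ Λ₀ * ∑ i, ξ i ^ 2)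
    (a : Fin n → Fin n → ℂ)
    (ha : ∀ l j, a l j = (M l j : ℂ) + (γ : ℂ) * (N l j : ℂ) * Complex.I)
    (en : Fin n) (hen : (en : ℕ) = n - 1) :
    ∀ ξ : Fin n → ℝ,
      lam₀ ^ 2 / Λ₀ ^ 2 * ∑ i, ξ i ^ 2 ≤
        ((a en en)⁻¹ * ∑ l, ∑ j, a l j * (ξ l : ℂ) * (ξ j : ℂ)).re := by
  intro ξ
  have hsum : ∑ l, ∑ j, a l j * (ξ l : ℂ) * (ξ j : ℂ)
      = ((∑ l, ∑ j, M l j * ξ l * ξ j : ℝ) : ℂ)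
        + ((γ * ∑ l, ∑ j, N l j * ξ l * ξ j : ℝ) : ℂ) * Complex.I := by
    push_cast
    simp only [Finset.mul_sum, Finset.sum_mul, ← Finset.sum_add_distrib]
    refine Finset.sum_congr rfl fun l _ => Finset.sum_congr rfl fun j _ => ?_
    rw [ha]
    ring
  have hm := hM (Pi.single en 1)
  have hv := hN (Pi.single en 1)
  simp [Pi.single_apply] at hm hv
  obtain ⟨hp, -⟩ := hM ξ
  obtain ⟨hq, -⟩ := hN ξ
  have hS : 0 ≤ ∑ i, ξ i ^ 2 := Finset.sum_nonneg fun i _ => sq_nonneg _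
  have hre : ((a en en)⁻¹ * ∑ l, ∑ j, a l j * (ξ l : ℂ) * (ξ j : ℂ)).re
      = (M en en * (∑ l, ∑ j, M l j * ξ l * ξ j)
          + γ ^ 2 * N en en * (∑ l, ∑ j, N l j * ξ l * ξ j))
        / (M en en ^ 2 + γ ^ 2 * N en en ^ 2) := by
    rw [hsum, ha]
    generalize (∑ l, ∑ j, M l j * ξ l * ξ j) = p
    generalize (∑ l, ∑ j, N l j * ξ l * ξ j) = q
    simp [Complex.mul_re, Complex.inv_re, Complex.inv_im, Complex.normSq_apply]
    ring
  rw [hre]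
  generalize (∑ l, ∑ j, M l j * ξ l * ξ j) = p at *
  generalize (∑ l, ∑ j, N l j * ξ l * ξ j) = q at *
  generalize (∑ i, ξ i ^ 2) = S at *
  obtain ⟨hm1, hm2⟩ := hm
  obtain ⟨hv1, hv2⟩ := hv
  generalize M en en = m at *
  generalize N en en = v at *
  have hm0 : 0 < m := by linarith
  have hv0 : 0 < v := by linarith
  have hΛ : 0 < Λ₀ := by linarith
  have hden : m ^ 2 + γ ^ 2 * v ^ 2 ≤ Λ₀ ^ 2 * (1 + γ ^ 2) := by
    have h1 : m ^ 2 ≤ Λ₀ ^ 2 := by gcongr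
    have h2 : γ ^ 2 * v ^ 2 ≤ γ ^ 2 * Λ₀ ^ 2 := by gcongr
    linarith
  have hnum : lam₀ ^ 2 * S * (1 + γ ^ 2) ≤ m * p + γ ^ 2 * v * q := by
    have h1 : lam₀ * (lam₀ * S) ≤ m * p := by gcongr
    have h2 : γ ^ 2 * lam₀ * (lam₀ * S) ≤ γ ^ 2 * v * q := by gcongr
    linarith
  rw [div_mul_eq_mul_div, div_le_div_iff₀ (by positivity) (by positivity)]
  calc lam₀ ^ 2 * S * (m ^ 2 + γ ^ 2 * v ^ 2)
      ≤ lam₀ ^ 2 * S * (Λ₀ ^ 2 * (1 + γ ^ 2)) := by gcongr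
    _ = lam₀ ^ 2 * S * (1 + γ ^ 2) * Λ₀ ^ 2 := by ring
    _ ≤ (m * p + γ ^ 2 * v * q) * Λ₀ ^ 2 := by gcongr
end

section
/- For every ξ' ∈ ℝ^{n−1}: λ̃₁|ξ'|² ≤ Re(Σ_{ℓ,j=1}^{n−1}(a_{ℓj}/a_{nn})ξ_ℓξ_j) − E(ξ')², and consequently Re b(ξ') ≥ λ̃₁|ξ'|² + F(ξ')², which is strictly positive whenever ξ' ≠ 0. Here λ̃₁ = λ₀²/Λ₀². -/
theorem quad_snoc {m : ℕ} (M : Fin (m+1) → Fin (m+1) → ℝ) (hs : ∀ l j, M l j = M j l)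
    (x : Fin m → ℝ) (t : ℝ) :
    ∑ l, ∑ j, M l j * (Fin.snoc x t : Fin (m+1) → ℝ) l * (Fin.snoc x t : Fin (m+1) → ℝ) j =
      (∑ l, ∑ j, M (Fin.castSucc l) (Fin.castSucc j) * x l * x j)
        + 2 * t * (∑ j, M (Fin.last m) (Fin.castSucc j) * x j)
        + t ^ 2 * M (Fin.last m) (Fin.last m) := by
  simp only [Fin.sum_univ_castSucc, Fin.snoc_castSucc, Fin.snoc_last, Finset.sum_add_distrib]
  have h1 : ∑ i, M (Fin.castSucc i) (Fin.last m) * x i * t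
      = t * ∑ j, M (Fin.last m) (Fin.castSucc j) * x j := by
    rw [Finset.mul_sum]
    refine Finset.sum_congr rfl fun i _ => ?_
    rw [hs]; ring
  have h2 : ∑ i, M (Fin.last m) (Fin.castSucc i) * t * x i
      = t * ∑ j, M (Fin.last m) (Fin.castSucc j) * x j := by
    rw [Finset.mul_sum]
    refine Finset.sum_congr rfl fun i _ => ?_
    ring
  rw [h1, h2]; ring

theorem sq_snoc {m : ℕ} (x : Fin m → ℝ) (t : ℝ) :
    ∑ l, (Fin.snoc x t : Fin (m+1) → ℝ) l ^ 2 = ∑ l, x l ^ 2 + t ^ 2 := by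
  simp only [Fin.sum_univ_castSucc, Fin.snoc_castSucc, Fin.snoc_last]

theorem real_core (lam L γ d k A A' P Q E F s : ℝ) (hγ : 0 < γ) (hl : 0 < lam) (hL : lam ≤ L)
    (hs : 0 ≤ s) (hd : lam ≤ d) (hd' : d ≤ L) (hk : lam ≤ k) (hk' : k ≤ L)
    (h1 : lam * (s + E ^ 2) ≤ A + 2 * (-E) * P + E ^ 2 * d)
    (h2 : lam * (s + E ^ 2) ≤ A' + 2 * (-E) * Q + E ^ 2 * k)
    (hP : P = E * d - F * (γ * k)) (hQ : γ * Q = E * (γ * k) + F * d) :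
    lam ^ 2 / L ^ 2 * s ≤ (A * d + γ * A' * (γ * k)) / (d ^ 2 + (γ * k) ^ 2) - E ^ 2 := by
  have hd0 : 0 < d := by linarith
  have hk0 : 0 < k := by linarith
  have hL0 : 0 < L := by linarith
  have hD : 0 < d ^ 2 + (γ * k) ^ 2 := by positivity
  have hr : lam ^ 2 / L ^ 2 * s ≤ lam / L * s := by
    apply mul_le_mul_of_nonneg_right _ hs
    rw [div_le_div_iff₀ (by positivity) hL0]
    have : 0 ≤ lam * L * (L - lam) := mul_nonneg (by positivity) (by linarith)
    nlinarith
  refine hr.trans ?_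
  rw [le_sub_iff_add_le, le_div_iff₀ hD]
  have g1 : lam * s ≤ A + 2 * (-E) * P + E ^ 2 * d := by nlinarith [mul_nonneg hl.le (sq_nonneg E)]
  have g2 : lam * s ≤ A' + 2 * (-E) * Q + E ^ 2 * k := by nlinarith [mul_nonneg hl.le (sq_nonneg E)]
  have g3 := mul_le_mul_of_nonneg_right g1 hd0.le
  have g4 := mul_le_mul_of_nonneg_right g2 (by positivity : 0 ≤ γ ^ 2 * k)
  have g5 : lam / L * s * (d ^ 2 + (γ * k) ^ 2) ≤ lam * s * (d + γ ^ 2 * k) := by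
    have : d ^ 2 + (γ * k) ^ 2 ≤ L * (d + γ ^ 2 * k) := by
      have := mul_nonneg hd0.le (sub_nonneg.2 hd')
      have := mul_nonneg (by positivity : 0 ≤ γ ^ 2 * k) (sub_nonneg.2 hk')
      nlinarith
    calc _ ≤ lam / L * s * (L * (d + γ ^ 2 * k)) :=
          mul_le_mul_of_nonneg_left this (by positivity)
      _ = _ := by field_simp
  have g6 : P * d + γ * Q * (γ * k) = E * (d ^ 2 + (γ * k) ^ 2) := by rw [hQ, hP]; ring
  have g7 : E * (P * d + γ * Q * (γ * k)) = E * (E * (d ^ 2 + (γ * k) ^ 2)) := by rw [g6]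
  nlinarith

theorem helper (m : ℕ)
    (M N : Fin (m+1) → Fin (m+1) → ℝ) (γ lam₀ Λ₀ : ℝ)
    (hγ : 0 < γ) (hlam₀ : 0 < lam₀) (hlamΛ : lam₀ ≤ Λ₀)
    (hMsym : ∀ l j, M l j = M j l) (hNsym : ∀ l j, N l j = N j l)
    (hM : ∀ ξ : Fin (m+1) → ℝ,
      lam₀ * ∑ i, ξ i ^ 2 ≤ ∑ l, ∑ j, M l j * ξ l * ξ j ∧
      ∑ l, ∑ j, M l j * ξ l * ξ j ≤ Λ₀ * ∑ i, ξ i ^ 2)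
    (hN : ∀ ξ : Fin (m+1) → ℝ,
      lam₀ * ∑ i, ξ i ^ 2 ≤ ∑ l, ∑ j, N l j * ξ l * ξ j ∧
      ∑ l, ∑ j, N l j * ξ l * ξ j ≤ Λ₀ * ∑ i, ξ i ^ 2)
    (a : Fin (m+1) → Fin (m+1) → ℂ)
    (ha : ∀ l j, a l j = (M l j : ℂ) + (γ : ℂ) * (N l j : ℂ) * Complex.I)
    (em : Fin m → Fin (m+1)) (hem : em = Fin.castSucc)
    (en : Fin (m+1)) (hen : en = Fin.last m)
    (x : Fin m → ℝ) (E F : ℝ)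
    (hEF : ∑ j, a en (em j) / a en en * (x j : ℂ) = (E : ℂ) + (F : ℂ) * Complex.I) :
      (lam₀ ^ 2 / Λ₀ ^ 2 * ∑ i, x i ^ 2 ≤
        (∑ l, ∑ j, a (em l) (em j) / a en en * (x l : ℂ) * (x j : ℂ)).re - E ^ 2) ∧
      (lam₀ ^ 2 / Λ₀ ^ 2 * (∑ i, x i ^ 2) + F ^ 2 ≤ (((a en en) ^ 2)⁻¹ * ∑ l, ∑ j, (a (em l) (em j) * a en en - a en (em l) * a en (em j)) * (x l : ℂ) * (x j : ℂ)).re) ∧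
      (x ≠ 0 → 0 < (((a en en) ^ 2)⁻¹ * ∑ l, ∑ j, (a (em l) (em j) * a en en - a en (em l) * a en (em j)) * (x l : ℂ) * (x j : ℂ)).re) := by
  subst hem hen
  have bM : ∀ t, _ := fun t => hM (Fin.snoc x t)
  have bN : ∀ t, _ := fun t => hN (Fin.snoc x t)
  have cM := hM (Fin.snoc (0 : Fin m → ℝ) 1)
  have cN := hN (Fin.snoc (0 : Fin m → ℝ) 1)
  simp only [quad_snoc M hMsym, quad_snoc N hNsym, sq_snoc] at bM bN cM cN
  simp at cM cN
  set d := M (Fin.last m) (Fin.last m) with hd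
  set k := N (Fin.last m) (Fin.last m) with hk
  set c := a (Fin.last m) (Fin.last m) with hc
  have hcv : c = (d : ℂ) + (γ : ℂ) * k * Complex.I := ha _ _
  have hcre : c.re = d := by simp [hcv]
  have hcim : c.im = γ * k := by simp [hcv]
  have hd0 : 0 < d := by linarith [cM.1]
  have hc0 : c ≠ 0 := by
    intro h; rw [h] at hcre; simp at hcre; linarith
  set A := ∑ l, ∑ j, M (Fin.castSucc l) (Fin.castSucc j) * x l * x j with hA
  set A' := ∑ l, ∑ j, N (Fin.castSucc l) (Fin.castSucc j) * x l * x j with hA'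
  set P := ∑ j, M (Fin.last m) (Fin.castSucc j) * x j with hP
  set Q := ∑ j, N (Fin.last m) (Fin.castSucc j) * x j with hQ
  set s := ∑ i, x i ^ 2 with hs
  have eS : ∑ l, ∑ j, a (Fin.castSucc l) (Fin.castSucc j) * (x l : ℂ) * (x j : ℂ)
      = (A : ℂ) + (γ : ℂ) * A' * Complex.I := by
    rw [hA, hA']
    push_cast
    simp only [Finset.mul_sum, Finset.sum_mul, ← Finset.sum_add_distrib, ha]
    refine Finset.sum_congr rfl fun i _ => Finset.sum_congr rfl fun j _ => ?_
    ring
  have eP : ∑ j, a (Fin.last m) (Fin.castSucc j) * (x j : ℂ)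
      = (P : ℂ) + (γ : ℂ) * Q * Complex.I := by
    rw [hP, hQ]
    push_cast
    simp only [Finset.mul_sum, Finset.sum_mul, ← Finset.sum_add_distrib, ha]
    refine Finset.sum_congr rfl fun i _ => ?_
    ring
  have eS' : ∑ l, ∑ j, a (Fin.castSucc l) (Fin.castSucc j) / c * (x l : ℂ) * (x j : ℂ)
      = ((A : ℂ) + (γ : ℂ) * A' * Complex.I) / c := by
    rw [← eS]
    simp only [Finset.sum_div]
    refine Finset.sum_congr rfl fun i _ => Finset.sum_congr rfl fun j _ => ?_
    ring
  have eP' : (P : ℂ) + (γ : ℂ) * Q * Complex.I = ((E : ℂ) + (F : ℂ) * Complex.I) * c := by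
    rw [← eP, ← hEF, Finset.sum_mul]
    refine Finset.sum_congr rfl fun i _ => ?_
    field_simp
  have eb : (c ^ 2)⁻¹ * ∑ l, ∑ j, (a (Fin.castSucc l) (Fin.castSucc j) * c
        - a (Fin.last m) (Fin.castSucc l) * a (Fin.last m) (Fin.castSucc j)) * (x l : ℂ) * (x j : ℂ)
      = ((A : ℂ) + (γ : ℂ) * A' * Complex.I) / c - ((E : ℂ) + (F : ℂ) * Complex.I) ^ 2 := by
    have : ∑ l, ∑ j, (a (Fin.castSucc l) (Fin.castSucc j) * c
        - a (Fin.last m) (Fin.castSucc l) * a (Fin.last m) (Fin.castSucc j)) * (x l : ℂ) * (x j : ℂ)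
        = ((A : ℂ) + (γ : ℂ) * A' * Complex.I) * c
          - (((E : ℂ) + (F : ℂ) * Complex.I) * c) * (((E : ℂ) + (F : ℂ) * Complex.I) * c) := by
      rw [← eP', ← eP, ← eS, Finset.sum_mul_sum, Finset.sum_mul, ← Finset.sum_sub_distrib]
      refine Finset.sum_congr rfl fun i _ => ?_
      rw [Finset.sum_mul, ← Finset.sum_sub_distrib]
      refine Finset.sum_congr rfl fun j _ => ?_
      ring
    rw [this]
    field_simp
  have hP1 : P = E * d - F * (γ * k) := by
    have := congrArg Complex.re eP'
    simpa [hcre, hcim] using this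
  have hQ1 : γ * Q = E * (γ * k) + F * d := by
    have := congrArg Complex.im eP'
    simpa [hcre, hcim] using this
  have hs0 : 0 ≤ s := Finset.sum_nonneg fun i _ => sq_nonneg _
  have hSre : (((A : ℂ) + (γ : ℂ) * A' * Complex.I) / c).re
      = (A * d + γ * A' * (γ * k)) / (d ^ 2 + (γ * k) ^ 2) := by
    rw [Complex.div_re, Complex.normSq_apply, hcre, hcim]
    simp
    ring
  have key := real_core lam₀ Λ₀ γ d k A A' P Q E F s hγ hlam₀ hlamΛ hs0 cM.1 cM.2 cN.1 cN.2
    (by simpa using (bM (-E)).1) (by simpa using (bN (-E)).1) hP1 hQ1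
  have hsq : (((E : ℂ) + (F : ℂ) * Complex.I) ^ 2).re = E ^ 2 - F ^ 2 := by
    rw [pow_two, Complex.mul_re]; simp; ring
  have key2 : lam₀ ^ 2 / Λ₀ ^ 2 * s + F ^ 2 ≤
      (((A : ℂ) + (γ : ℂ) * A' * Complex.I) / c - ((E : ℂ) + (F : ℂ) * Complex.I) ^ 2).re := by
    rw [Complex.sub_re, hsq, hSre]; linarith
  rw [eS', eb]
  refine ⟨by rw [hSre]; exact key, key2, fun hx => lt_of_lt_of_le ?_ key2⟩
  obtain ⟨i, hi⟩ := Function.ne_iff.1 hx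
  have hspos : 0 < s := Finset.sum_pos' (fun i _ => sq_nonneg _)
    ⟨i, Finset.mem_univ _, by have : x i ≠ 0 := hi
                              positivity⟩
  have : 0 < Λ₀ := by linarith
  positivity

/-- `λ̃₁|ξ'|² ≤ Re(Σ (a_ℓj/a_nn) ξ'_ℓ ξ'_j) − E(ξ')²`, hence
`Re b(ξ') ≥ λ̃₁|ξ'|² + F(ξ')² > 0` for `ξ' ≠ 0`, where `λ̃₁ = λ₀²/Λ₀²`. -/
theorem stmt_7
    (n : ℕ) (hn : 2 ≤ n)
    (M N : Fin n → Fin n → ℝ) (γ lam₀ Λ₀ : ℝ)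
    (hγ : 0 < γ) (hlam₀ : 0 < lam₀) (hlamΛ : lam₀ ≤ Λ₀)
    (hMsym : ∀ l j, M l j = M j l) (hNsym : ∀ l j, N l j = N j l)
    (hM : ∀ ξ : Fin n → ℝ,
      lam₀ * ∑ i, ξ i ^ 2 ≤ ∑ l, ∑ j, M l j * ξ l * ξ j ∧
      ∑ l, ∑ j, M l j * ξ l * ξ j ≤ Λ₀ * ∑ i, ξ i ^ 2)
    (hN : ∀ ξ : Fin n → ℝ,
      lam₀ * ∑ i, ξ i ^ 2 ≤ ∑ l, ∑ j, N l j * ξ l * ξ j ∧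
      ∑ l, ∑ j, N l j * ξ l * ξ j ≤ Λ₀ * ∑ i, ξ i ^ 2)
    (a : Fin n → Fin n → ℂ)
    (ha : ∀ l j, a l j = (M l j : ℂ) + (γ : ℂ) * (N l j : ℂ) * Complex.I)
    (en : Fin n) (hen : (en : ℕ) = n - 1)
    (E F : (Fin (n - 1) → ℝ) → ℝ)
    (hEF : ∀ ξ' : Fin (n - 1) → ℝ,
      ∑ j, a en (emb n j) / a en en * (ξ' j : ℂ) = (E ξ' : ℂ) + (F ξ' : ℂ) * Complex.I) :
    ∀ ξ' : Fin (n - 1) → ℝ,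
      (lam₀ ^ 2 / Λ₀ ^ 2 * ∑ i, ξ' i ^ 2 ≤
        (∑ l, ∑ j, a (emb n l) (emb n j) / a en en * (ξ' l : ℂ) * (ξ' j : ℂ)).re - E ξ' ^ 2) ∧
      (lam₀ ^ 2 / Λ₀ ^ 2 * (∑ i, ξ' i ^ 2) + F ξ' ^ 2 ≤ (((a en en) ^ 2)⁻¹ * ∑ l, ∑ j, (a (emb n l) (emb n j) * a en en - a en (emb n l) * a en (emb n j)) * (ξ' l : ℂ) * (ξ' j : ℂ)).re) ∧
      (ξ' ≠ 0 → 0 < (((a en en) ^ 2)⁻¹ * ∑ l, ∑ j, (a (emb n l) (emb n j) * a en en - a en (emb n l) * a en (emb n j)) * (ξ' l : ℂ) * (ξ' j : ℂ)).re) := by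
  obtain ⟨m, rfl⟩ : ∃ m, n = m + 1 := ⟨n - 1, by omega⟩
  intro ξ'
  exact helper m M N γ lam₀ Λ₀ hγ hlam₀ hlamΛ hMsym hNsym hM hN a ha (emb (m+1)) rfl en
    (Fin.ext (by simpa using hen)) ξ' (E ξ') (F ξ') (hEF ξ')
end

section
/- Let t ≥ 1 and define f(x,y) = (1 − xy)/(√(1+x²)·√(1+y²)) for (x,y) ∈ [0,t]×[0,t]. Then f attains its minimum on [0,t]×[0,t] at (x,y) = (t,t); equivalently, f(x,y) ≥ (1 − t²)/(1 + t²) for all (x,y) ∈ [0,t]×[0,t]. -/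
/-- For `t ≥ 1`, the function `f(x,y) = (1 - xy)/(√(1+x²)·√(1+y²))`
attains its minimum on `[0,t]×[0,t]` at `(t,t)`; equivalently
`f(x,y) ≥ (1 - t²)/(1 + t²)` for all `(x,y) ∈ [0,t]×[0,t]`. -/
theorem stmt_13 (t : ℝ) (ht : 1 ≤ t) :
    ∀ x y : ℝ, x ∈ Set.Icc (0:ℝ) t → y ∈ Set.Icc (0:ℝ) t →
      (1 - t ^ 2) / (1 + t ^ 2) ≤
        (1 - x * y) / (Real.sqrt (1 + x ^ 2) * Real.sqrt (1 + y ^ 2)) := by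
  rintro x y ⟨hx0, hxt⟩ ⟨hy0, hyt⟩
  have hS : 1 + x * y ≤ Real.sqrt (1 + x ^ 2) * Real.sqrt (1 + y ^ 2) := by
    rw [← Real.sqrt_mul (by positivity)]
    apply Real.le_sqrt_of_sq_le
    nlinarith [sq_nonneg (x - y)]
  have hxy : x * y ≤ t * t := mul_le_mul hxt hyt hy0 (by linarith)
  have ht2 : 0 ≤ t ^ 2 - 1 := by nlinarith
  have hpos : 0 < Real.sqrt (1 + x ^ 2) * Real.sqrt (1 + y ^ 2) := by positivity
  rw [div_le_div_iff₀ (by positivity) hpos]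
  nlinarith [mul_le_mul_of_nonneg_left hS ht2]
end

section
/- There exist constants C₁, C₂ > 0, depending only on λ₀ and Λ₀ (and not on γ), such that for all ξ, v ∈ ℝⁿ: if p(ξ + iv) = 0, then C₁|ξ| ≤ |v| ≤ C₂|ξ|, where p(ζ) = Σ_{ℓ,j=1}^n a_{ℓj}ζ_ℓζ_j for ζ ∈ ℂⁿ. -/
lemma aux_cs (L : ℝ) (n : ℕ) (hL : 0 < L) (M : Fin n → Fin n → ℝ) (hs : ∀ l j, M l j = M j l)
    (h0 : ∀ x : Fin n → ℝ, 0 ≤ ∑ l, ∑ j, M l j * x l * x j)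
    (x y : Fin n → ℝ) (X V : ℝ)
    (hx : ∑ l, ∑ j, M l j * x l * x j ≤ L * X) (hy : ∑ l, ∑ j, M l j * y l * y j ≤ L * V) :
    (∑ l, ∑ j, M l j * x l * y j) ^ 2 ≤ L ^ 2 * (X * V) := by
  have hsym : ∑ l, ∑ j, M l j * y l * x j = ∑ l, ∑ j, M l j * x l * y j := by
    rw [Finset.sum_comm]
    refine Finset.sum_congr rfl fun l _ => Finset.sum_congr rfl fun j _ => ?_
    rw [hs j l]; ring
  have hq : ∀ t : ℝ, 0 ≤ (∑ l, ∑ j, M l j * y l * y j) * (t * t)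
      + (2 * ∑ l, ∑ j, M l j * x l * y j) * t + ∑ l, ∑ j, M l j * x l * x j := by
    intro t
    have h := h0 (fun i => x i + t * y i)
    have e : ∑ l, ∑ j, M l j * (x l + t * y l) * (x j + t * y j)
        = (∑ l, ∑ j, M l j * y l * y j) * (t * t)
          + (∑ l, ∑ j, M l j * x l * y j + ∑ l, ∑ j, M l j * y l * x j) * t
          + ∑ l, ∑ j, M l j * x l * x j := by
      simp only [Finset.sum_mul, ← Finset.sum_add_distrib]
      refine Finset.sum_congr rfl fun l _ => Finset.sum_congr rfl fun j _ => ?_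
      ring
    rw [hsym] at e
    simp only [e] at h
    linarith
  have hd := discrim_le_zero hq
  unfold discrim at hd
  have := mul_le_mul hx hy (h0 y) ((h0 x).trans hx)
  nlinarith

lemma aux_key (l L a b c d m k X V : ℝ) (hl : 0 < l) (hL : l ≤ L) (hX : 0 ≤ X) (hV : 0 ≤ V)
    (ha : l * X ≤ a) (hb : b ≤ L * V) (hc : l * X ≤ c) (hd : d ≤ L * V)
    (hm : m ^ 2 ≤ L ^ 2 * (X * V)) (hk : k ^ 2 ≤ L ^ 2 * (X * V))
    (h : (a - b) * (c - d) = -4 * (m * k)) : X ≤ 8 * L ^ 2 / l ^ 2 * V := by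
  by_contra! hlt
  have hLp : 0 < L := hl.trans_le hL
  rw [div_mul_eq_mul_div, div_lt_iff₀ (by positivity)] at hlt
  have hXp : 0 < X := by
    rcases hX.lt_or_eq with h | h
    · exact h
    · subst h; nlinarith [mul_nonneg (sq_nonneg L) hV]
  have hmk : -(m * k) ≤ L ^ 2 * (X * V) := by nlinarith [sq_nonneg (m + k)]
  have h1 : L * V ≤ l * X / 8 := by
    have : l * (8 * (L * V)) ≤ l * (l * X) := by
      have := mul_le_mul_of_nonneg_right hL (mul_nonneg hLp.le hV)
      nlinarith
    have := le_of_mul_le_mul_left this hl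
    linarith
  have hp : 0 < l * X := by positivity
  have h2 : (7 / 8 * (l * X)) * (7 / 8 * (l * X)) ≤ (a - b) * (c - d) :=
    mul_le_mul (by linarith) (by linarith) (by linarith) (by linarith)
  have h3 := mul_lt_mul_of_pos_left hlt hXp
  nlinarith [mul_pos hp hp]

/-- there are `C₁, C₂ > 0` depending only on `λ₀, Λ₀` (not on `γ`) such
that for any matrix `𝒜 = M + iγN` as in the context and any `ξ, v ∈ ℝⁿ`,
`p(ξ + iv) = 0` implies `C₁|ξ| ≤ |v| ≤ C₂|ξ|`. -/
theorem stmt_17 (lam₀ Λ₀ : ℝ) (hlam₀ : 0 < lam₀) (hlamΛ : lam₀ ≤ Λ₀) :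
    ∃ C₁ C₂ : ℝ, 0 < C₁ ∧ 0 < C₂ ∧
    ∀ (n : ℕ), 2 ≤ n →
    ∀ (M N : Fin n → Fin n → ℝ) (γ : ℝ), 0 < γ →
    (∀ l j, M l j = M j l) → (∀ l j, N l j = N j l) →
    (∀ ξ : Fin n → ℝ,
      lam₀ * ∑ i, ξ i ^ 2 ≤ ∑ l, ∑ j, M l j * ξ l * ξ j ∧
      ∑ l, ∑ j, M l j * ξ l * ξ j ≤ Λ₀ * ∑ i, ξ i ^ 2) →
    (∀ ξ : Fin n → ℝ,
      lam₀ * ∑ i, ξ i ^ 2 ≤ ∑ l, ∑ j, N l j * ξ l * ξ j ∧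
      ∑ l, ∑ j, N l j * ξ l * ξ j ≤ Λ₀ * ∑ i, ξ i ^ 2) →
    ∀ a : Fin n → Fin n → ℂ,
    (∀ l j, a l j = (M l j : ℂ) + (γ : ℂ) * (N l j : ℂ) * Complex.I) →
    ∀ ξ v : Fin n → ℝ,
      (∑ l, ∑ j, a l j * ((ξ l : ℂ) + (v l : ℂ) * Complex.I) *
        ((ξ j : ℂ) + (v j : ℂ) * Complex.I)) = 0 →
      C₁ * Real.sqrt (∑ i, ξ i ^ 2) ≤ Real.sqrt (∑ i, v i ^ 2) ∧
      Real.sqrt (∑ i, v i ^ 2) ≤ C₂ * Real.sqrt (∑ i, ξ i ^ 2) := by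
  have hLp : 0 < Λ₀ := hlam₀.trans_le hlamΛ
  have hK : 0 < 8 * Λ₀ ^ 2 / lam₀ ^ 2 := by positivity
  refine ⟨(Real.sqrt (8 * Λ₀ ^ 2 / lam₀ ^ 2))⁻¹, Real.sqrt (8 * Λ₀ ^ 2 / lam₀ ^ 2),
    by positivity, by positivity, ?_⟩
  intro n _ M N γ hγ hMs hNs hM hN a ha ξ v hp
  have hX : 0 ≤ ∑ i, ξ i ^ 2 := Finset.sum_nonneg fun i _ => sq_nonneg _
  have hV : 0 ≤ ∑ i, v i ^ 2 := Finset.sum_nonneg fun i _ => sq_nonneg _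
  have pos : ∀ x : Fin n → ℝ, 0 ≤ lam₀ * ∑ i, x i ^ 2 := fun x =>
    mul_nonneg hlam₀.le (Finset.sum_nonneg fun i _ => sq_nonneg _)
  have hm := aux_cs Λ₀ n hLp M hMs (fun x => (pos x).trans (hM x).1) ξ v _ _ (hM ξ).2 (hM v).2
  have hk := aux_cs Λ₀ n hLp N hNs (fun x => (pos x).trans (hN x).1) ξ v _ _ (hN ξ).2 (hN v).2
  have hsym : ∀ P : Fin n → Fin n → ℝ, (∀ l j, P l j = P j l) →
      ∑ l, ∑ j, P l j * v l * ξ j = ∑ l, ∑ j, P l j * ξ l * v j := by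
    intro P hP
    rw [Finset.sum_comm]
    refine Finset.sum_congr rfl fun l _ => Finset.sum_congr rfl fun j _ => ?_
    rw [hP j l]; ring
  have hre : (∑ l, ∑ j, M l j * ξ l * ξ j) - (∑ l, ∑ j, M l j * v l * v j)
      - γ * ((∑ l, ∑ j, N l j * ξ l * v j) + ∑ l, ∑ j, N l j * v l * ξ j) = 0 := by
    have h := congrArg Complex.re hp
    simp only [Complex.re_sum, Complex.zero_re] at h
    rw [← h]
    simp only [Finset.mul_sum, ← Finset.sum_add_distrib, ← Finset.sum_sub_distrib]
    refine Finset.sum_congr rfl fun l _ => Finset.sum_congr rfl fun j _ => ?_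
    rw [ha]
    simp
    ring
  have him : (∑ l, ∑ j, M l j * ξ l * v j) + (∑ l, ∑ j, M l j * v l * ξ j)
      + γ * ((∑ l, ∑ j, N l j * ξ l * ξ j) - ∑ l, ∑ j, N l j * v l * v j) = 0 := by
    have h := congrArg Complex.im hp
    simp only [Complex.im_sum, Complex.zero_im] at h
    rw [← h]
    simp only [Finset.mul_sum, ← Finset.sum_add_distrib, ← Finset.sum_sub_distrib]
    refine Finset.sum_congr rfl fun l _ => Finset.sum_congr rfl fun j _ => ?_
    rw [ha]
    simp
    ring
  rw [hsym N hNs] at hre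
  rw [hsym M hMs] at him
  obtain ⟨hM1, hM2⟩ := hM ξ
  obtain ⟨hM3, hM4⟩ := hM v
  obtain ⟨hN1, hN2⟩ := hN ξ
  obtain ⟨hN3, hN4⟩ := hN v
  generalize (∑ l, ∑ j, M l j * ξ l * ξ j) = A at *
  generalize (∑ l, ∑ j, M l j * v l * v j) = B at *
  generalize (∑ l, ∑ j, N l j * ξ l * ξ j) = C at *
  generalize (∑ l, ∑ j, N l j * v l * v j) = D at *
  generalize (∑ l, ∑ j, M l j * ξ l * v j) = m at *
  generalize (∑ l, ∑ j, N l j * ξ l * v j) = k at *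
  generalize (∑ i, ξ i ^ 2) = X at *
  generalize (∑ i, v i ^ 2) = V at *
  have h : (A - B) * (C - D) = -4 * (m * k) := by
    linear_combination (C - D) * hre + 2 * k * him
  have r1 := aux_key lam₀ Λ₀ A B C D m k X V hlam₀ hlamΛ hX hV hM1 hM4 hN1 hN4 hm hk h
  have r2 := aux_key lam₀ Λ₀ B A D C m k V X hlam₀ hlamΛ hV hX hM3 hM2 hN3 hN2
    (by rwa [mul_comm V X]) (by rwa [mul_comm V X]) (by linarith)
  constructor
  · rw [inv_mul_le_iff₀ (by positivity), ← Real.sqrt_mul hK.le]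
    exact Real.sqrt_le_sqrt r1
  · rw [← Real.sqrt_mul hK.le]
    exact Real.sqrt_le_sqrt r2
end
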